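/- For any quaternions u₁, u, u₂ over ℝ, the triple product with conjugate central factor decomposes as u₁ * (star u) * u₂ = (⟪u₁, u⟫ • u₂ - ⟪u₁, u₂⟫ • u + ⟪u, u₂⟫ • u₁) + (⟪cross u₁ u, u₂⟫ • 1 - (u₁.re) • (cross u u₂) + (u.re) • (cross u₁ u₂) - (u₂.re) • (cross u₁ u)), i.e. into the sum of the triple anticommutator and the triple commutator in closed form (the associator term vanishing for quaternions). -/

import Mathlib

open Quaternion RealInnerProductSpace

/-- The cross product of two quaternions. -/
noncomputable def cross (a b : ℍ) : ℍ := (a * b - b * a) / 2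

/-!
Write `⟪x, y⟫` for `(x * star y).re`. Moving the conjugation across `a * star b * c` three times by
`x * star y = 2⟪x, y⟫ - y * star x` and `star x * y = 2⟪x, y⟫ - star y * x` ends at
`-c * star b * a`, so the terms picked up on the way are twice the part symmetric in `a, c`.
For the antisymmetric part, `a * star b` and `star b * a` differ only in the sign of their term
`⅟2 • ⁅a, b⁆`, so only the anticommutator of `⁅a, b⁆` with `c` occurs; since `⁅a, b⁆` is purely
imaginary, the same rule evaluates it.
-/

namespace QuaternionTripleProduct

variable {R : Type*} [CommRing R] {c₁ c₂ : R}

lemma mul_star_add_mul_star (a b : ℍ[R,c₁,c₂]) :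
    a * star b + b * star a = (2 * (a * star b).re) • (1 : ℍ[R,c₁,c₂]) := by
  simpa [← QuaternionAlgebra.coe_mul_eq_smul] using
    QuaternionAlgebra.self_add_star' (a * star b)

lemma star_mul_add_star_mul (a b : ℍ[R,c₁,c₂]) :
    star a * b + star b * a = (2 * (a * star b).re) • (1 : ℍ[R,c₁,c₂]) := by
  have re_comm : (star a * b).re = (a * star b).re := by simp
  simpa [← QuaternionAlgebra.coe_mul_eq_smul, re_comm] using
    QuaternionAlgebra.self_add_star' (star a * b)

lemma star_eq_two_re_smul_one_sub (a : ℍ[R,c₁,c₂]) :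
    star a = (2 * a.re) • (1 : ℍ[R,c₁,c₂]) - a := by
  simpa [← QuaternionAlgebra.coe_mul_eq_smul] using QuaternionAlgebra.star_eq_two_re_sub a

lemma re_lie (a b : ℍ[R,c₁,c₂]) : ⁅a, b⁆.re = 0 := by
  simp only [Ring.lie_def, QuaternionAlgebra.re_sub, QuaternionAlgebra.re_mul]
  ring

lemma mul_add_mul_of_re_eq_zero {a : ℍ[R,c₁,c₂]} (ha : a.re = 0) (b : ℍ[R,c₁,c₂]) :
    a * b + b * a = (2 : R) • (b.re • a - (a * star b).re • 1) := by
  have star_a : star a = -a := by simpa [ha] using star_eq_two_re_smul_one_sub a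
  calc
    a * b + b * a = (2 * b.re) • a - (a * star b + b * star a) := by
      rw [star_a, star_eq_two_re_smul_one_sub b, mul_sub, mul_smul_comm, mul_one, mul_neg]
      abel
    _ = (2 : R) • (b.re • a - (a * star b).re • 1) := by
      rw [mul_star_add_mul_star]
      module

lemma star_mul_eq_mul_star_add_lie (a b : ℍ[R,c₁,c₂]) : star b * a = a * star b + ⁅a, b⁆ := by
  simp only [star_eq_two_re_smul_one_sub b, Ring.lie_def, sub_mul, mul_sub, smul_mul_assoc,
    mul_smul_comm, one_mul, mul_one]
  abel

section InvertibleTwo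

variable [Invertible (2 : R)]

lemma mul_star_eq_sub_half_lie (a b : ℍ[R,c₁,c₂]) :
    a * star b = (a * star b).re • 1 + b.re • a - a.re • b - (⅟2 : R) • ⁅a, b⁆ := by
  have antisymm_part : a * star b - b * star a = (2 * b.re) • a - (2 * a.re) • b - ⁅a, b⁆ := by
    simp only [star_eq_two_re_smul_one_sub, Ring.lie_def, mul_sub, mul_smul_comm, mul_one]
    abel
  calc
    a * star b =
        (⅟2 : R) • ((a * star b + b * star a) + (a * star b - b * star a)) := by
      rw [add_add_sub_cancel, ← two_smul R, invOf_smul_smul]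
    _ = (⅟2 : R) • ((2 * (a * star b).re) • (1 : ℍ[R,c₁,c₂])
          + ((2 * b.re) • a - (2 * a.re) • b - ⁅a, b⁆)) := by
      rw [mul_star_add_mul_star, antisymm_part]
    _ = (a * star b).re • 1 + b.re • a - a.re • b - (⅟2 : R) • ⁅a, b⁆ := by
      simp only [smul_add, smul_sub, mul_smul, invOf_smul_smul]
      abel

lemma star_mul_eq_add_half_lie (a b : ℍ[R,c₁,c₂]) :
    star b * a = (a * star b).re • 1 + b.re • a - a.re • b + (⅟2 : R) • ⁅a, b⁆ := by
  have lie_eq : ⁅a, b⁆ = (⅟2 : R) • ⁅a, b⁆ + (⅟2 : R) • ⁅a, b⁆ := by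
    rw [← add_smul, invOf_two_add_invOf_two, one_smul]
  calc
    star b * a = a * star b + ⁅a, b⁆ := star_mul_eq_mul_star_add_lie a b
    _ = ((a * star b).re • 1 + b.re • a - a.re • b - (⅟2 : R) • ⁅a, b⁆)
          + ((⅟2 : R) • ⁅a, b⁆ + (⅟2 : R) • ⁅a, b⁆) :=
      congrArg₂ (· + ·) (mul_star_eq_sub_half_lie a b) lie_eq
    _ = (a * star b).re • 1 + b.re • a - a.re • b + (⅟2 : R) • ⁅a, b⁆ := by abel

/-- The triple anticommutator: the part of `a * star b * c` symmetric in `a` and `c`, normalized so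
that it and `tripleCommutator` add up to that product. -/
def tripleAnticommutator (a b c : ℍ[R,c₁,c₂]) : ℍ[R,c₁,c₂] :=
  (⅟2 : R) • (a * star b * c + c * star b * a)

/-- The triple commutator: the part of `a * star b * c` antisymmetric in `a` and `c`, with the
normalization of `tripleAnticommutator`. -/
def tripleCommutator (a b c : ℍ[R,c₁,c₂]) : ℍ[R,c₁,c₂] :=
  (⅟2 : R) • (a * star b * c - c * star b * a)

lemma tripleAnticommutator_add_tripleCommutator (a b c : ℍ[R,c₁,c₂]) :
    tripleAnticommutator a b c + tripleCommutator a b c = a * star b * c := by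
  rw [tripleAnticommutator, tripleCommutator, ← smul_add, add_add_sub_cancel, ← two_smul R,
    invOf_smul_smul]

lemma tripleAnticommutator_eq (a b c : ℍ[R,c₁,c₂]) :
    tripleAnticommutator a b c =
      (a * star b).re • c - (a * star c).re • b + (b * star c).re • a := by
  rw [tripleAnticommutator, invOf_smul_eq_iff]
  calc
    a * star b * c + c * star b * a =
        (a * star b + b * star a) * c - b * (star a * c + star c * a)
          + (b * star c + c * star b) * a := by noncomm_ring
    _ = (2 : R) • ((a * star b).re • c - (a * star c).re • b + (b * star c).re • a) := by
      simp only [mul_star_add_mul_star, star_mul_add_star_mul, smul_mul_assoc, mul_smul_comm,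
        one_mul, mul_one]
      module

lemma tripleCommutator_eq (a b c : ℍ[R,c₁,c₂]) :
    tripleCommutator a b c =
      (((⅟2 : R) • ⁅a, b⁆) * star c).re • (1 : ℍ[R,c₁,c₂]) - a.re • ((⅟2 : R) • ⁅b, c⁆)
        + b.re • ((⅟2 : R) • ⁅a, c⁆) - c.re • ((⅟2 : R) • ⁅a, b⁆) := by
  have half_lie_re : ((⅟2 : R) • ⁅a, b⁆).re = 0 := by
    rw [QuaternionAlgebra.re_smul, re_lie, smul_zero]
  rw [tripleCommutator, invOf_smul_eq_iff]
  calc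
    a * star b * c - c * star b * a =
        ((a * star b).re • 1 + b.re • a - a.re • b - (⅟2 : R) • ⁅a, b⁆) * c
          - c * ((a * star b).re • 1 + b.re • a - a.re • b + (⅟2 : R) • ⁅a, b⁆) := by
      rw [← mul_star_eq_sub_half_lie, ← star_mul_eq_add_half_lie, mul_assoc c]
    _ = b.re • ⁅a, c⁆ - a.re • ⁅b, c⁆
          - ((⅟2 : R) • ⁅a, b⁆ * c + c * (⅟2 : R) • ⁅a, b⁆) := by
      simp only [Ring.lie_def a c, Ring.lie_def b c, add_mul, sub_mul, mul_add, mul_sub,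
        smul_mul_assoc, mul_smul_comm, one_mul, mul_one]
      module
    _ = b.re • ⁅a, c⁆ - a.re • ⁅b, c⁆
          - (2 : R) • (c.re • (⅟2 : R) • ⁅a, b⁆ - ((⅟2 : R) • ⁅a, b⁆ * star c).re • 1) := by
      rw [mul_add_mul_of_re_eq_zero half_lie_re]
    _ = (2 : R) • ((((⅟2 : R) • ⁅a, b⁆) * star c).re • (1 : ℍ[R,c₁,c₂])
          - a.re • ((⅟2 : R) • ⁅b, c⁆) + b.re • ((⅟2 : R) • ⁅a, c⁆)
          - c.re • ((⅟2 : R) • ⁅a, b⁆)) := by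
      rw [← smul_invOf_smul (2 : R) ⁅a, c⁆, ← smul_invOf_smul (2 : R) ⁅b, c⁆]
      simp only [invOf_smul_smul]
      module

end InvertibleTwo

end QuaternionTripleProduct

open QuaternionTripleProduct in
theorem quaternion_triple_product_decomposition_general {R : Type*} [CommRing R]
    [Invertible (2 : R)] {c₁ c₂ : R} (a b c : ℍ[R,c₁,c₂]) :
    a * star b * c =
      ((a * star b).re • c - (a * star c).re • b + (b * star c).re • a) +
        ((((⅟2 : R) • ⁅a, b⁆) * star c).re • (1 : ℍ[R,c₁,c₂]) - a.re • ((⅟2 : R) • ⁅b, c⁆)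
          + b.re • ((⅟2 : R) • ⁅a, c⁆) - c.re • ((⅟2 : R) • ⁅a, b⁆)) := by
  rw [← tripleAnticommutator_add_tripleCommutator, tripleAnticommutator_eq, tripleCommutator_eq]

lemma cross_eq_invOf_two_smul_lie (a b : ℍ) : cross a b = (⅟2 : ℝ) • ⁅a, b⁆ := by
  have two_coe : ((2 : ℝ) : ℍ) = 2 := by norm_cast
  rw [cross, Ring.lie_def, invOf_eq_inv, div_eq_mul_inv, ← mul_coe_eq_smul, coe_inv, two_coe]

theorem quaternion_triple_product_decomposition (u₁ u u₂ : ℍ) :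
    u₁ * star u * u₂ =
      (⟪u₁, u⟫ • u₂ - ⟪u₁, u₂⟫ • u + ⟪u, u₂⟫ • u₁) +
        (⟪cross u₁ u, u₂⟫ • (1 : ℍ) - u₁.re • cross u u₂ + u.re • cross u₁ u₂
          - u₂.re • cross u₁ u) := by
  simp only [cross_eq_invOf_two_smul_lie, inner_def]
  exact quaternion_triple_product_decomposition_general u₁ u u₂
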